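/- Let K be any field and L ⊆ ℤ^m a nonzero positive lattice, and let q be the cardinality of T_min. Then bar(I_L) ≥ ⌈q/2⌉; that is, whenever rad(I_L) = rad((B_1,…,B_s)) for binomials B_1,…,B_s ∈ I_L, one has 2s ≥ q. -/

import Mathlib

open MvPolynomial

variable (K : Type*) [Field K]

/-- The monomial `x^w`. -/
noncomputable def mono {m : ℕ} (w : Fin m → ℕ) : MvPolynomial (Fin m) K :=
  ∏ i, X i ^ w i

/-- The positive part `u⁺` of an integer vector. -/
def intPos {m : ℕ} (u : Fin m → ℤ) : Fin m → ℕ := fun i => (u i).toNat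

/-- The negative part `u⁻` of an integer vector. -/
def intNeg {m : ℕ} (u : Fin m → ℤ) : Fin m → ℕ := fun i => (-u i).toNat

/-- Support of a vector of naturals. -/
def suppN {m : ℕ} (w : Fin m → ℕ) : Set (Fin m) := {i | w i ≠ 0}

/-- Support of a vector of integers. -/
def suppZ {m : ℕ} (u : Fin m → ℤ) : Set (Fin m) := {i | u i ≠ 0}

/-- The lattice ideal `I_L`. -/
noncomputable def latticeIdeal {m : ℕ} (L : AddSubgroup (Fin m → ℤ)) :
    Ideal (MvPolynomial (Fin m) K) :=
  Ideal.span {f | ∃ u ∈ L, f = mono K (intPos u) - mono K (intNeg u)}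

/-- A binomial: a difference of two monomials. -/
def IsBinomial {m : ℕ} (f : MvPolynomial (Fin m) K) : Prop :=
  ∃ u v : Fin m → ℕ, f = mono K u - mono K v

/-- `x^w` is an indispensable monomial of `I_L`: every binomial generating set of `I_L`
contains a binomial one of whose monomials is `x^w`. -/
def IsIndispMonomial {m : ℕ} (L : AddSubgroup (Fin m → ℤ)) (w : Fin m → ℕ) : Prop :=
  ∀ B : Set (MvPolynomial (Fin m) K), (∀ f ∈ B, IsBinomial K f) →
    Ideal.span B = latticeIdeal K L →
    ∃ f ∈ B, ∃ v : Fin m → ℕ, f = mono K w - mono K v ∨ f = mono K v - mono K w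

/-- The set `T` of supports of indispensable monomials of `I_L`. -/
def Tsupp {m : ℕ} (L : AddSubgroup (Fin m → ℤ)) : Set (Set (Fin m)) :=
  {E | ∃ w : Fin m → ℕ, IsIndispMonomial K L w ∧ E = suppN w}

/-- `T_min`, the set of minimal elements of `T` with respect to inclusion. -/
def Tmin {m : ℕ} (L : AddSubgroup (Fin m → ℤ)) : Set (Set (Fin m)) :=
  {E ∈ Tsupp K L | ∀ E' ∈ Tsupp K L, E' ⊆ E → E' = E}

/-- The saturation `Sat(L)` of the lattice `L`. -/
def satL {m : ℕ} (L : AddSubgroup (Fin m → ℤ)) : Set (Fin m → ℤ) :=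
  {u | ∃ d : ℤ, d ≠ 0 ∧ d • u ∈ L}

/-- A circuit of `Sat(L)`: a nonzero element of `Sat(L)` of minimal support
whose coordinates are relatively prime. -/
def IsCircuit {m : ℕ} (L : AddSubgroup (Fin m → ℤ)) (u : Fin m → ℤ) : Prop :=
  u ≠ 0 ∧ u ∈ satL L ∧
    (∀ v ∈ satL L, v ≠ 0 → suppZ v ⊆ suppZ u → suppZ v = suppZ u) ∧
    Finset.univ.gcd (fun i => (u i).natAbs) = 1

/-!
Evaluate polynomials at the `0`-`1` vectors `1_E`. The binomial `x^a - x^b` does not vanish at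
`1_E` iff exactly one of `supp a`, `supp b` is contained in `E`. Hence, if `E` is minimal among the
sets at which some member of `rad (B_1, …, B_s)` does not vanish, then `E` is the support of one of
the `2s` monomials of the `B_j`: some `B_j = x^a - x^b` does not vanish at `1_E`, say
`supp a ⊆ E` and `supp b ⊈ E`; then `B_j` does not vanish at `1_{supp a}` either, so `supp a = E`.

Every element of `T_min` is such a minimal set for `I_L`. The reason is that the monomials occurring
in elements of `I_L` are the multiples of the `x^{u⁺}` with `0 ≠ u ∈ L`, and that those `x^{u⁺}`
which are minimal for divisibility are indispensable.
-/

section Ideal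

variable {σ R : Type*} [CommRing R]

theorem exists_le_of_mem_span {S : Set (MvPolynomial σ R)} {f : MvPolynomial σ R}
    (hf : f ∈ Ideal.span S) {w : σ →₀ ℕ} (hw : w ∈ f.support) :
    ∃ g ∈ S, ∃ a ∈ g.support, a ≤ w := by
  have hle : Ideal.span S ≤
      Ideal.span ((fun a => monomial a (1 : R)) '' {a | ∃ g ∈ S, a ∈ g.support}) :=
    Ideal.span_le.2 fun g hg =>
      mem_ideal_span_monomial_image.2 fun a ha => ⟨a, ⟨g, hg, ha⟩, le_rfl⟩
  obtain ⟨a, ⟨g, hg, ha⟩, haw⟩ := mem_ideal_span_monomial_image.1 (hle hf) w hw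
  exact ⟨g, hg, a, ha, haw⟩

/-- The sets `E` whose indicator vector is not a zero of the ideal `I`. They record which
`0`-`1` points lie on the variety of `I`, and so depend only on the radical of `I`. -/
def nonvanishingSets (I : Ideal (MvPolynomial σ R)) : Set (Set σ) :=
  {E | ∃ f ∈ I, eval (E.indicator 1) f ≠ 0}

theorem notMem_nonvanishingSets_iff {I : Ideal (MvPolynomial σ R)} {E : Set σ} :
    E ∉ nonvanishingSets I ↔ I ≤ RingHom.ker (eval (E.indicator (1 : σ → R))) := by
  simp [nonvanishingSets, SetLike.le_def, RingHom.mem_ker]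

theorem mem_nonvanishingSets_span_iff {S : Set (MvPolynomial σ R)} {E : Set σ} :
    E ∈ nonvanishingSets (Ideal.span S) ↔ ∃ f ∈ S, eval (E.indicator 1) f ≠ 0 := by
  rw [← not_iff_not, notMem_nonvanishingSets_iff, Ideal.span_le]
  simp [Set.subset_def, RingHom.mem_ker]

theorem nonvanishingSets_radical [IsDomain R] (I : Ideal (MvPolynomial σ R)) :
    nonvanishingSets I.radical = nonvanishingSets I := by
  ext E
  rw [← not_iff_not, notMem_nonvanishingSets_iff, notMem_nonvanishingSets_iff,
    (RingHom.ker_isPrime _).radical_le_iff]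

end Ideal

section Binomial

variable {K} {m : ℕ}

theorem mono_eq_monomial (w : Fin m → ℕ) :
    mono K w = monomial (Finsupp.equivFunOnFinite.symm w) 1 := by
  simp [mono, monomial_eq, Finsupp.prod_fintype]

theorem mem_support_mono_sub_mono {a b : Fin m → ℕ} {w : Fin m →₀ ℕ} :
    w ∈ (mono K a - mono K b).support ↔ a ≠ b ∧ (a = w ∨ b = w) := by
  have heq (c : Fin m → ℕ) : Finsupp.equivFunOnFinite.symm c = w ↔ c = w :=
    Equiv.symm_apply_eq _
  simp only [mem_support_iff, mono_eq_monomial, coeff_sub, coeff_monomial, heq]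
  by_cases ha : a = w <;> by_cases hb : b = w <;> simp_all [eq_comm]

theorem suppN_subset_suppN {a b : Fin m → ℕ} (h : a ≤ b) : suppN a ⊆ suppN b :=
  fun i (hi : a i ≠ 0) => Nat.ne_of_gt ((Nat.pos_of_ne_zero hi).trans_le (h i))

open Classical in
theorem eval_indicator_mono (E : Set (Fin m)) (w : Fin m → ℕ) :
    eval (E.indicator 1) (mono K w) = if suppN w ⊆ E then 1 else 0 := by
  simp only [mono, map_prod, map_pow, eval_X]
  split_ifs with h
  · refine Finset.prod_eq_one fun i _ => ?_
    by_cases hi : w i = 0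
    · simp [hi]
    · simp [Set.indicator_of_mem (h hi)]
  · obtain ⟨i, hi, hiE⟩ := Set.not_subset.1 h
    exact Finset.prod_eq_zero (Finset.mem_univ i) (by simpa [hiE, suppN] using hi)

theorem eval_indicator_mono_sub_mono_ne_zero {E : Set (Fin m)} {a b : Fin m → ℕ} :
    eval (E.indicator 1) (mono K a - mono K b) ≠ 0 ↔ ¬(suppN a ⊆ E ↔ suppN b ⊆ E) := by
  by_cases ha : suppN a ⊆ E <;> by_cases hb : suppN b ⊆ E <;> simp [eval_indicator_mono, ha, hb]

theorem eq_suppN_of_minimal_nonvanishingSets {I : Ideal (MvPolynomial (Fin m) K)}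
    {E : Set (Fin m)} (hE : Minimal (· ∈ nonvanishingSets I) E) {a b : Fin m → ℕ}
    (hI : mono K a - mono K b ∈ I) (hne : eval (E.indicator 1) (mono K a - mono K b) ≠ 0) :
    suppN a = E ∨ suppN b = E := by
  rw [eval_indicator_mono_sub_mono_ne_zero] at hne
  by_cases ha : suppN a ⊆ E
  · have hb : ¬suppN b ⊆ suppN a := fun h => hne (by simp [ha, h.trans ha])
    exact .inl (hE.eq_of_subset
      ⟨_, hI, eval_indicator_mono_sub_mono_ne_zero.2 (by simp [hb])⟩ ha)
  · have hb : suppN b ⊆ E := by simpa [ha] using hne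
    have hab : ¬suppN a ⊆ suppN b := fun h => ha (h.trans hb)
    exact .inr (hE.eq_of_subset
      ⟨_, hI, eval_indicator_mono_sub_mono_ne_zero.2 (by simp [hab])⟩ hb)

theorem ncard_minimal_nonvanishingSets_le {ι : Type*} [Fintype ι]
    {I : Ideal (MvPolynomial (Fin m) K)} {B : ι → MvPolynomial (Fin m) K}
    (hB : ∀ j, IsBinomial K (B j)) (hrad : I.radical = (Ideal.span (Set.range B)).radical) :
    {E | Minimal (· ∈ nonvanishingSets I) E}.ncard ≤ 2 * Fintype.card ι := by
  have hI : nonvanishingSets I = nonvanishingSets (Ideal.span (Set.range B)) := by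
    rw [← nonvanishingSets_radical, hrad, nonvanishingSets_radical]
  choose a b hab using hB
  have hcover : {E | Minimal (· ∈ nonvanishingSets I) E} ⊆
      Set.range (Sum.elim (suppN ∘ a) (suppN ∘ b)) := by
    intro E hE
    rw [hI] at hE
    obtain ⟨_, ⟨j, rfl⟩, hj⟩ := mem_nonvanishingSets_span_iff.1 hE.prop
    have hmem : B j ∈ Ideal.span (Set.range B) := Ideal.subset_span ⟨j, rfl⟩
    rw [hab j] at hj hmem
    obtain h | h := eq_suppN_of_minimal_nonvanishingSets hE hmem hj
    · exact ⟨.inl j, h⟩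
    · exact ⟨.inr j, h⟩
  calc _ ≤ (Set.range (Sum.elim (suppN ∘ a) (suppN ∘ b))).ncard := Set.ncard_le_ncard hcover
    _ ≤ Nat.card (ι ⊕ ι) := Finite.card_range_le _
    _ = 2 * Fintype.card ι := by simp [two_mul]

end Binomial

section Lattice

variable {K} {m : ℕ} {L : AddSubgroup (Fin m → ℤ)}

theorem suppN_intPos_ne_suppN_intNeg {u : Fin m → ℤ} (hu : u ≠ 0) :
    suppN (intPos u) ≠ suppN (intNeg u) := by
  obtain ⟨i, hi⟩ := Function.ne_iff.1 hu
  intro h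
  have hiff : i ∈ suppN (intPos u) ↔ i ∈ suppN (intNeg u) := by rw [h]
  simp only [suppN, intPos, intNeg, Set.mem_ofPred_eq, Pi.zero_apply] at hi hiff
  lia

theorem intPos_ne_intNeg {u : Fin m → ℤ} (hu : u ≠ 0) : intPos u ≠ intNeg u :=
  fun h => suppN_intPos_ne_suppN_intNeg hu (congrArg suppN h)

/-- The positive parts of the nonzero vectors of `L`. Their monomials generate the monomial ideal
spanned by all monomials occurring in elements of `I_L`. Negative parts are included, since
`u⁻ = (-u)⁺`. -/
def posParts (L : AddSubgroup (Fin m → ℤ)) : Set (Fin m → ℕ) :=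
  intPos '' {u ∈ L | u ≠ 0}

theorem intPos_mem_posParts {u : Fin m → ℤ} (hu : u ∈ L) (hu0 : u ≠ 0) :
    intPos u ∈ posParts L :=
  ⟨u, ⟨hu, hu0⟩, rfl⟩

theorem intNeg_mem_posParts {u : Fin m → ℤ} (hu : u ∈ L) (hu0 : u ≠ 0) :
    intNeg u ∈ posParts L :=
  intPos_mem_posParts (neg_mem hu) (neg_ne_zero.2 hu0)

theorem mono_intPos_sub_mono_intNeg_mem {u : Fin m → ℤ} (hu : u ∈ L) :
    mono K (intPos u) - mono K (intNeg u) ∈ latticeIdeal K L :=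
  Ideal.subset_span ⟨u, hu, rfl⟩

theorem exists_posParts_le_of_mem_support {f : MvPolynomial (Fin m) K}
    (hf : f ∈ latticeIdeal K L) {w : Fin m →₀ ℕ} (hw : w ∈ f.support) :
    ∃ c ∈ posParts L, c ≤ w := by
  obtain ⟨_, ⟨u, hu, rfl⟩, a, ha, haw⟩ := exists_le_of_mem_span hf hw
  obtain ⟨hne, ha⟩ := mem_support_mono_sub_mono.1 ha
  have hu0 : u ≠ 0 := by
    rintro rfl
    exact hne rfl
  obtain ha | ha := ha
  · exact ⟨_, intPos_mem_posParts hu hu0, ha.trans_le haw⟩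
  · exact ⟨_, intNeg_mem_posParts hu hu0, ha.trans_le haw⟩

theorem IsIndispMonomial.exists_posParts_le {w : Fin m → ℕ} (hw : IsIndispMonomial K L w) :
    ∃ c ∈ posParts L, c ≤ w := by
  obtain ⟨f, ⟨⟨u, hu, hfu⟩, hf0⟩, v, hfv⟩ :=
    hw ({f | ∃ u ∈ L, f = mono K (intPos u) - mono K (intNeg u)} \ {0})
      (fun f ⟨⟨u, _, hf⟩, _⟩ => ⟨_, _, hf⟩) Submodule.span_sdiff_singleton_zero
  have hfL : f ∈ latticeIdeal K L := hfu ▸ mono_intPos_sub_mono_intNeg_mem hu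
  have hwv : w ≠ v := by
    rintro rfl
    exact hf0 (by simpa using hfv)
  refine exists_posParts_le_of_mem_support (w := Finsupp.equivFunOnFinite.symm w) hfL ?_
  obtain rfl | rfl := hfv
  · exact mem_support_mono_sub_mono.2 ⟨hwv, .inl rfl⟩
  · exact mem_support_mono_sub_mono.2 ⟨hwv.symm, .inr rfl⟩

theorem isIndispMonomial_of_minimal {w : Fin m → ℕ} (hw : Minimal (· ∈ posParts L) w) :
    IsIndispMonomial K L w := by
  intro B hB hspan
  obtain ⟨u, ⟨hu, hu0⟩, rfl⟩ := hw.prop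
  have hsupp : Finsupp.equivFunOnFinite.symm (intPos u) ∈
      (mono K (intPos u) - mono K (intNeg u)).support :=
    mem_support_mono_sub_mono.2 ⟨intPos_ne_intNeg hu0, .inl rfl⟩
  obtain ⟨g, hg, a, hag, hau⟩ :=
    exists_le_of_mem_span (hspan ▸ mono_intPos_sub_mono_intNeg_mem hu) hsupp
  obtain ⟨c, hc, hca⟩ :=
    exists_posParts_le_of_mem_support (hspan ▸ Ideal.subset_span hg) hag
  have ha : a = intPos u := le_antisymm hau ((hw.le_of_le hc (hca.trans hau)).trans hca)
  obtain ⟨p, q, rfl⟩ := hB g hg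
  obtain ⟨-, rfl | rfl⟩ := mem_support_mono_sub_mono.1 hag
  · exact ⟨_, hg, q, .inl (by rw [ha])⟩
  · exact ⟨_, hg, p, .inr (by rw [ha])⟩

theorem suppN_eq_of_mem_Tmin {E : Set (Fin m)} (hE : E ∈ Tmin K L) {w : Fin m → ℕ}
    (hw : w ∈ posParts L) (hwE : suppN w ⊆ E) : suppN w = E := by
  obtain ⟨c, hcw, hc⟩ := exists_minimal_le_of_wellFoundedLT (· ∈ posParts L) w hw
  have hcw' : suppN c ⊆ suppN w := suppN_subset_suppN hcw
  have hcE : suppN c = E := hE.2 _ ⟨c, isIndispMonomial_of_minimal hc, rfl⟩ (hcw'.trans hwE)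
  exact hwE.antisymm (hcE ▸ hcw')

theorem mem_nonvanishingSets_of_mem_Tmin {E : Set (Fin m)} (hE : E ∈ Tmin K L) :
    E ∈ nonvanishingSets (latticeIdeal K L) := by
  obtain ⟨w, hw, rfl⟩ := hE.1
  obtain ⟨_, ⟨u, ⟨hu, hu0⟩, rfl⟩, huw⟩ := hw.exists_posParts_le
  have hpos : suppN (intPos u) = suppN w :=
    suppN_eq_of_mem_Tmin hE (intPos_mem_posParts hu hu0) (suppN_subset_suppN huw)
  have hneg : ¬suppN (intNeg u) ⊆ suppN w := fun h =>
    suppN_intPos_ne_suppN_intNeg hu0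
      (hpos.trans (suppN_eq_of_mem_Tmin hE (intNeg_mem_posParts hu hu0) h).symm)
  exact ⟨_, mono_intPos_sub_mono_intNeg_mem hu,
    eval_indicator_mono_sub_mono_ne_zero.2 (by simp [hpos, hneg])⟩

theorem Tmin_subset_minimal_nonvanishingSets :
    Tmin K L ⊆ {E | Minimal (· ∈ nonvanishingSets (latticeIdeal K L)) E} := by
  refine fun E hE => ⟨mem_nonvanishingSets_of_mem_Tmin hE, fun A hA hAE => ?_⟩
  obtain ⟨_, ⟨u, hu, rfl⟩, hne⟩ := mem_nonvanishingSets_span_iff.1 hA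
  rw [eval_indicator_mono_sub_mono_ne_zero] at hne
  have hu0 : u ≠ 0 := by
    rintro rfl
    exact hne Iff.rfl
  by_cases hpos : suppN (intPos u) ⊆ A
  · exact (suppN_eq_of_mem_Tmin hE (intPos_mem_posParts hu hu0) (hpos.trans hAE)).ge.trans hpos
  · have hneg : suppN (intNeg u) ⊆ A := by simpa [hpos] using hne
    exact (suppN_eq_of_mem_Tmin hE (intNeg_mem_posParts hu hu0) (hneg.trans hAE)).ge.trans hneg

end Lattice

theorem stmt3_general {m : ℕ} (L : AddSubgroup (Fin m → ℤ)) {ι : Type*} [Fintype ι]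
    (B : ι → MvPolynomial (Fin m) K) (hB : ∀ j, IsBinomial K (B j))
    (hrad : (latticeIdeal K L).radical = (Ideal.span (Set.range B)).radical) :
    (Tmin K L).ncard ≤ 2 * Fintype.card ι :=
  (Set.ncard_le_ncard Tmin_subset_minimal_nonvanishingSets).trans
    (ncard_minimal_nonvanishingSets_le hB hrad)

theorem stmt3 {m : ℕ} (L : AddSubgroup (Fin m → ℤ))
    (hL0 : L ≠ ⊥) (hLpos : ∀ u ∈ L, (∀ i, 0 ≤ u i) → u = 0)
    (s : ℕ) (B : Fin s → MvPolynomial (Fin m) K)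
    (hB : ∀ j, IsBinomial K (B j) ∧ B j ∈ latticeIdeal K L)
    (hrad : (latticeIdeal K L).radical = (Ideal.span (Set.range B)).radical) :
    (Tmin K L).ncard ≤ 2 * s := by
  simpa using stmt3_general K L B (fun j => (hB j).1) hrad
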